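/- arXiv:1910.07164 — 4 statements merged into one kernel-verified Lean document; each statement's English description precedes it below -/
import Mathlib

section
/- For every positive integer k there exists a constant C_k such that for all positive integers L one has ∑_{g ∣ L} (log g / g) · k^{ω(g)} ≤ C_k · (log log (L + 2))^{k+1}, where the sum runs over all positive divisors g of L and ω(g) denotes the number of distinct prime divisors of g. -/
/-!
Write `w g = κ ^ ω(g) / g` and expand `log g = ∑_{a ∣ g} Λ a`. For a prime power `a` one has
`w (a * b) ≤ max 1 κ / a * w b`, so summing over `g = a * b` bounds the sum in question by
`max 1 κ * (∑_{a ∣ L} Λ a / a) * ∑_{b ∣ L} w b`, and comparison with an Euler product gives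
`∑_{b ∣ L} w b ≤ exp (κ * ∑_{p ∣ L} 1 / (p - 1))`.

Let `N ≥ log L`. Since `∑_{d ∣ L} Λ d = log L`, the divisors `d > N` contribute only `O(1)` to
`∑_{d ∣ L} Λ d / d` and to `∑_{d ∣ L} Λ d / (d * log d)`. Mertens' upper bounds for the remaining
`d ≤ N` give `log N + O(1)` and `log (log N) + O(1)`, hence the bound `O((log N) ^ (κ + 1))`. Take
`N = ⌈log (L + 2)⌉`.
-/

open Finset Real
open scoped ArithmeticFunction.vonMangoldt

theorem sum_vonMangoldt_mul_natDiv_le (n : ℕ) :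
    ∑ d ∈ Ioc 0 n, Λ d * (n / d : ℕ) ≤ n * log n := by
  rw [← ArithmeticFunction.sum_Ioc_mul_zeta_eq_sum, ArithmeticFunction.vonMangoldt_mul_zeta]
  calc ∑ m ∈ Ioc 0 n, ArithmeticFunction.log m
      ≤ ∑ _m ∈ Ioc 0 n, log n := by
        refine sum_le_sum fun m hm => ?_
        obtain ⟨hm_pos, hmn⟩ := mem_Ioc.1 hm
        rw [ArithmeticFunction.log_apply]
        gcongr
    _ = n * log n := by simp

theorem sum_vonMangoldt_div_le (n : ℕ) :
    ∑ d ∈ Ioc 0 n, Λ d / d ≤ log n + (log 4 + 4) := by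
  obtain rfl | hn := n.eq_zero_or_pos
  · simp only [Ioc_self, sum_empty, Nat.cast_zero, log_zero]
    positivity
  have hψ : ∑ d ∈ Ioc 0 n, Λ d ≤ (log 4 + 4) * n := by
    simpa only [Chebyshev.psi, Nat.floor_natCast] using
      Chebyshev.psi_le_const_mul_self (Nat.cast_nonneg n)
  have hfloor (d : ℕ) : Λ d * (n / d) ≤ Λ d * (n / d : ℕ) + Λ d := by
    rw [← mul_add_one]
    refine mul_le_mul_of_nonneg_left ?_ ArithmeticFunction.vonMangoldt_nonneg
    rw [← Nat.floor_div_eq_div (K := ℝ)]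
    exact (Nat.lt_floor_add_one _).le
  refine le_of_mul_le_mul_left ?_ (Nat.cast_pos.2 hn : (0 : ℝ) < n)
  calc n * ∑ d ∈ Ioc 0 n, Λ d / d
      = ∑ d ∈ Ioc 0 n, Λ d * (n / d) := by
        rw [mul_sum]
        exact sum_congr rfl fun d _ => mul_div_left_comm _ _ _
    _ ≤ ∑ d ∈ Ioc 0 n, Λ d * (n / d : ℕ) + ∑ d ∈ Ioc 0 n, Λ d := by
        rw [← sum_add_distrib]
        exact sum_le_sum fun d _ => hfloor d
    _ ≤ n * log n + (log 4 + 4) * n :=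
        add_le_add (sum_vonMangoldt_mul_natDiv_le n) hψ
    _ = n * (log n + (log 4 + 4)) := by ring

theorem mul_inv_sub_inv_le_log_sub_log {b x y : ℝ} (hx : 0 < x) (hxy : x ≤ y) (hb : b ≤ x) :
    b * (x⁻¹ - y⁻¹) ≤ log y - log x := by
  have hy : 0 < y := hx.trans_le hxy
  calc b * (x⁻¹ - y⁻¹)
      ≤ x * (x⁻¹ - y⁻¹) :=
        mul_le_mul_of_nonneg_right hb (sub_nonneg.2 (inv_anti₀ hx hxy))
    _ = 1 - (y / x)⁻¹ := by field_simp
    _ ≤ log (y / x) := one_sub_inv_le_log_of_pos (div_pos hy hx)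
    _ = log y - log x := log_div hy.ne' hx.ne'

-- Summation by parts; the `d = 1` term on the left is `a 1 / 0 = 0`.
theorem sum_div_log_le_sum_sub_div_log {a : ℕ → ℝ} {K : ℝ} (ha : 0 ≤ a 1)
    (hK : ∀ n, 2 ≤ n → ∑ d ∈ Ioc 0 n, a d ≤ log n + K) {n : ℕ} (hn : 2 ≤ n) :
    ∑ d ∈ Ioc 0 n, a d / log d ≤
      (∑ d ∈ Ioc 0 n, a d - K) / log n + log (log n) + (K / log 2 - log (log 2)) := by
  induction n, hn using Nat.le_induction with
  | base =>
    have hIoc : Ioc 0 2 = {1, 2} := rfl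
    have : 0 ≤ a 1 / log 2 := by positivity
    simp only [hIoc, sum_pair one_lt_two.ne, Nat.cast_one, log_one, div_zero, Nat.cast_ofNat]
    linear_combination this
  | succ n hn ih =>
    rw [sum_Ioc_succ_top n.zero_le, sum_Ioc_succ_top n.zero_le]
    have hlog_pos : 0 < log n := log_pos (by exact_mod_cast hn)
    have hlog_le : log n ≤ log (n + 1 : ℕ) := by gcongr; omega
    linear_combination ih +
      mul_inv_sub_inv_le_log_sub_log hlog_pos hlog_le (sub_le_iff_le_add.2 (hK n hn))

theorem sum_div_log_le {a : ℕ → ℝ} {K : ℝ} (ha : 0 ≤ a 1)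
    (hK : ∀ n, 2 ≤ n → ∑ d ∈ Ioc 0 n, a d ≤ log n + K) {n : ℕ} (hn : 2 ≤ n) :
    ∑ d ∈ Ioc 0 n, a d / log d ≤ log (log n) + (1 + K / log 2 - log (log 2)) := by
  have hlog_pos : 0 < log n := log_pos (by exact_mod_cast hn)
  have hquot : (∑ d ∈ Ioc 0 n, a d - K) / log n ≤ 1 :=
    (div_le_one hlog_pos).2 (sub_le_iff_le_add.2 (hK n hn))
  linarith [sum_div_log_le_sum_sub_div_log ha hK hn]

theorem sum_divisors_vonMangoldt_mul_le {f : ℕ → ℝ} (hf : ∀ d, 0 ≤ f d) {N : ℕ} {M : ℝ}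
    (hM : ∀ d, N < d → f d ≤ M) (L : ℕ) :
    ∑ d ∈ L.divisors, Λ d * f d ≤ ∑ d ∈ Ioc 0 N, Λ d * f d + log L * M := by
  have hM_nonneg : 0 ≤ M := (hf _).trans (hM _ N.lt_succ_self)
  have hterm (d : ℕ) : 0 ≤ Λ d * f d := mul_nonneg ArithmeticFunction.vonMangoldt_nonneg (hf d)
  rw [← sum_filter_add_sum_filter_not L.divisors (· ≤ N)]
  gcongr ?_ + ?_
  · refine sum_le_sum_of_subset_of_nonneg (fun d hd => ?_) fun d _ _ => hterm d
    obtain ⟨hdL, hdN⟩ := mem_filter.1 hd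
    exact mem_Ioc.2 ⟨Nat.pos_of_mem_divisors hdL, hdN⟩
  · calc ∑ d ∈ L.divisors with ¬d ≤ N, Λ d * f d
        ≤ ∑ d ∈ L.divisors with ¬d ≤ N, Λ d * M :=
          sum_le_sum fun d hd => mul_le_mul_of_nonneg_left
            (hM d (not_le.1 (mem_filter.1 hd).2)) ArithmeticFunction.vonMangoldt_nonneg
      _ ≤ ∑ d ∈ L.divisors, Λ d * M :=
          sum_le_sum_of_subset_of_nonneg (filter_subset _ _) fun d _ _ =>
            mul_nonneg ArithmeticFunction.vonMangoldt_nonneg hM_nonneg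
      _ = log L * M := by rw [← sum_mul, ArithmeticFunction.vonMangoldt_sum]

theorem sum_divisors_vonMangoldt_div_le {L N : ℕ} (hN : 0 < N) (hLN : log L ≤ N) :
    ∑ d ∈ L.divisors, Λ d / d ≤ log N + (log 4 + 5) := by
  have hM (d : ℕ) (hd : N < d) : (d : ℝ)⁻¹ ≤ (N : ℝ)⁻¹ := by gcongr
  have htail : log L * (N : ℝ)⁻¹ ≤ 1 := by
    rw [← div_eq_mul_inv]
    exact div_le_one_of_le₀ hLN N.cast_nonneg
  have hsplit := sum_divisors_vonMangoldt_mul_le (fun d => by positivity) hM L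
  simp only [← div_eq_mul_inv (Λ _)] at hsplit
  linarith [sum_vonMangoldt_div_le N]

theorem sum_divisors_vonMangoldt_div_log_le {L N : ℕ} (hN : 2 ≤ N) (hLN : log L ≤ N) :
    ∑ d ∈ L.divisors, Λ d / d / log d ≤
      log (log N) + (1 + (log 4 + 5) / log 2 - log (log 2)) := by
  have hN_pos : (0 : ℝ) < N := by positivity
  have hM (d : ℕ) (hd : N < d) : ((d : ℝ) * log d)⁻¹ ≤ (N * log 2)⁻¹ := by
    have hd_two : (2 : ℝ) ≤ d := by exact_mod_cast hN.trans hd.le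
    gcongr
  have htail : log L * ((N : ℝ) * log 2)⁻¹ ≤ 1 / log 2 := by
    rw [mul_inv, ← mul_assoc, ← div_eq_mul_inv, ← div_eq_mul_inv]
    gcongr
    exact div_le_one_of_le₀ hLN hN_pos.le
  have hsplit := sum_divisors_vonMangoldt_mul_le (fun d => by positivity) hM L
  simp only [← div_eq_mul_inv (Λ _), ← div_div (Λ _)] at hsplit
  have hmertens := sum_div_log_le (a := fun d => Λ d / d) (by simp)
    (fun n _ => sum_vonMangoldt_div_le n) hN
  linear_combination hsplit + hmertens + htail

theorem sum_inv_sub_one_le (s : Finset ℕ) (hs : ∀ p ∈ s, 2 ≤ p) :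
    ∑ p ∈ s, 1 / ((p : ℝ) - 1) ≤ ∑ p ∈ s, 1 / (p : ℝ) + 2 * ∑' n : ℕ, 1 / (n : ℝ) ^ 2 := by
  have hterm (p : ℕ) (hp : p ∈ s) : 1 / ((p : ℝ) - 1) ≤ 1 / p + 2 * (1 / (p : ℝ) ^ 2) := by
    have hp_two : (2 : ℝ) ≤ p := by exact_mod_cast hs p hp
    have hp_sub : (0 : ℝ) < p - 1 := by linarith
    have heq : 1 / (p : ℝ) + 2 * (1 / (p : ℝ) ^ 2) = (p + 2) / (p : ℝ) ^ 2 := by field_simp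
    rw [heq, div_le_div_iff₀ hp_sub (by positivity)]
    linarith
  have hsquares : ∑ p ∈ s, 1 / (p : ℝ) ^ 2 ≤ ∑' n : ℕ, 1 / (n : ℝ) ^ 2 :=
    (summable_one_div_nat_pow.2 one_lt_two).sum_le_tsum s fun n _ => by positivity
  calc ∑ p ∈ s, 1 / ((p : ℝ) - 1)
      ≤ ∑ p ∈ s, (1 / (p : ℝ) + 2 * (1 / (p : ℝ) ^ 2)) := sum_le_sum hterm
    _ ≤ ∑ p ∈ s, 1 / (p : ℝ) + 2 * ∑' n : ℕ, 1 / (n : ℝ) ^ 2 := by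
      rw [sum_add_distrib, ← mul_sum]
      gcongr

theorem sum_primeFactors_inv_le_sum_divisors (L : ℕ) :
    ∑ p ∈ L.primeFactors, 1 / (p : ℝ) ≤ ∑ d ∈ L.divisors, Λ d / d / log d := by
  have hprime (p : ℕ) (hp : p ∈ L.primeFactors) : 1 / (p : ℝ) = Λ p / p / log p := by
    have hp := Nat.prime_of_mem_primeFactors hp
    have hlog_pos : 0 < log p := log_pos (by exact_mod_cast hp.one_lt)
    rw [ArithmeticFunction.vonMangoldt_apply_prime hp, div_right_comm, div_self hlog_pos.ne']
  rw [sum_congr rfl hprime]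
  refine sum_le_sum_of_subset_of_nonneg (fun p hp => ?_) fun d _ _ => ?_
  · exact Nat.mem_divisors.2 ⟨Nat.dvd_of_mem_primeFactors hp, (Nat.mem_primeFactors.1 hp).2.2⟩
  · have := ArithmeticFunction.vonMangoldt_nonneg (n := d)
    positivity

theorem exists_sum_primeFactors_inv_sub_one_le :
    ∃ E : ℝ, ∀ L N : ℕ, 2 ≤ N → log L ≤ N →
      ∑ p ∈ L.primeFactors, 1 / ((p : ℝ) - 1) ≤ log (log N) + E := by
  refine ⟨1 + (log 4 + 5) / log 2 - log (log 2) + 2 * ∑' n : ℕ, 1 / (n : ℝ) ^ 2,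
    fun L N hN hLN => ?_⟩
  linarith [sum_inv_sub_one_le L.primeFactors fun p hp => (Nat.prime_of_mem_primeFactors hp).two_le,
    sum_primeFactors_inv_le_sum_divisors L, sum_divisors_vonMangoldt_div_log_le hN hLN]

theorem sum_divisors_filter_dvd_le {w : ℕ → ℝ} (hw : ∀ n, 0 ≤ w n) {a : ℕ} {c : ℝ}
    (hc : ∀ b, w (a * b) ≤ c * w b) (L : ℕ) :
    ∑ g ∈ L.divisors with a ∣ g, w g ≤ c * ∑ b ∈ L.divisors, w b := by
  have hsubset : {g ∈ L.divisors | a ∣ g} ⊆ L.divisors.image (a * ·) := by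
    intro g hg
    obtain ⟨hgL, b, rfl⟩ := mem_filter.1 hg
    obtain ⟨habL, hL⟩ := Nat.mem_divisors.1 hgL
    exact mem_image_of_mem _ (Nat.mem_divisors.2 ⟨dvd_of_mul_left_dvd habL, hL⟩)
  calc ∑ g ∈ L.divisors with a ∣ g, w g
      ≤ ∑ g ∈ L.divisors.image (a * ·), w g :=
        sum_le_sum_of_subset_of_nonneg hsubset fun g _ _ => hw g
    _ ≤ ∑ b ∈ L.divisors, w (a * b) := sum_image_le_of_nonneg fun g _ => hw g
    _ ≤ c * ∑ b ∈ L.divisors, w b := by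
        rw [mul_sum]
        exact sum_le_sum fun b _ => hc b

theorem sum_divisors_log_mul_eq (w : ℕ → ℝ) (L : ℕ) :
    ∑ g ∈ L.divisors, log g * w g = ∑ a ∈ L.divisors, Λ a * ∑ g ∈ L.divisors with a ∣ g, w g := by
  simp only [← ArithmeticFunction.vonMangoldt_sum, sum_mul, mul_sum]
  refine sum_comm' fun g a => ?_
  simp only [mem_filter, Nat.mem_divisors]
  constructor
  · rintro ⟨⟨hgL, hL⟩, hag, -⟩
    exact ⟨⟨⟨hgL, hL⟩, hag⟩, hag.trans hgL, hL⟩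
  · rintro ⟨⟨⟨hgL, hL⟩, hag⟩, -⟩
    exact ⟨⟨hgL, hL⟩, hag, ne_zero_of_dvd_ne_zero hL hgL⟩

theorem sum_divisors_log_mul_le {w u : ℕ → ℝ} (hw : ∀ n, 0 ≤ w n)
    (hu : ∀ a b, IsPrimePow a → w (a * b) ≤ u a * w b) (L : ℕ) :
    ∑ g ∈ L.divisors, log g * w g ≤ (∑ a ∈ L.divisors, Λ a * u a) * ∑ b ∈ L.divisors, w b := by
  rw [sum_divisors_log_mul_eq, sum_mul]
  refine sum_le_sum fun a _ => ?_
  by_cases ha : IsPrimePow a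
  · rw [mul_assoc]
    exact mul_le_mul_of_nonneg_left (sum_divisors_filter_dvd_le hw (fun b => hu a b ha) L)
      ArithmeticFunction.vonMangoldt_nonneg
  · simp only [ArithmeticFunction.vonMangoldt_eq_zero_iff.2 ha, zero_mul, le_refl]

theorem pow_card_insert_le {α R : Type*} [DecidableEq α] [Semiring R] [LinearOrder R]
    [IsOrderedRing R] {κ : R} (hκ : 0 ≤ κ) (s : Finset α) (x : α) :
    κ ^ #(insert x s) ≤ max 1 κ * κ ^ #s := by
  by_cases hx : x ∈ s
  · rw [insert_eq_of_mem hx]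
    exact le_mul_of_one_le_left (pow_nonneg hκ _) (le_max_left 1 κ)
  · rw [card_insert_of_notMem hx, pow_succ']
    gcongr
    exact le_max_right 1 κ

/-- The weight `κ ^ ω(n) / n`, where `ω(n)` is the number of distinct primes dividing `n`. Its value
at `n = 0` is `0`. -/
noncomputable def omegaWeight (κ : ℝ) (n : ℕ) : ℝ :=
  κ ^ #n.primeFactors / n

section OmegaWeight

variable {κ : ℝ}

theorem omegaWeight_nonneg (hκ : 0 ≤ κ) (n : ℕ) : 0 ≤ omegaWeight κ n := by
  unfold omegaWeight
  positivity

theorem omegaWeight_one : omegaWeight κ 1 = 1 := by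
  simp [omegaWeight]

theorem omegaWeight_mul_of_coprime {m n : ℕ} (h : m.Coprime n) :
    omegaWeight κ (m * n) = omegaWeight κ m * omegaWeight κ n := by
  simp only [omegaWeight]
  rw [h.primeFactors_mul, card_union_of_disjoint h.disjoint_primeFactors, pow_add, Nat.cast_mul,
    mul_div_mul_comm]

theorem omegaWeight_prime_pow {p e : ℕ} (hp : p.Prime) (he : e ≠ 0) :
    omegaWeight κ (p ^ e) = κ * (p : ℝ)⁻¹ ^ e := by
  rw [omegaWeight, Nat.primeFactors_prime_pow he hp, card_singleton, pow_one, Nat.cast_pow,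
    inv_pow, div_eq_mul_inv]

theorem omegaWeight_mul_le (hκ : 0 ≤ κ) {a : ℕ} (ha : IsPrimePow a) (b : ℕ) :
    omegaWeight κ (a * b) ≤ max 1 κ / a * omegaWeight κ b := by
  obtain rfl | hb := eq_or_ne b 0
  · simp [omegaWeight]
  obtain ⟨p, e, hp, he, rfl⟩ := ha
  have hfactors : (p ^ e * b).primeFactors = insert p b.primeFactors := by
    rw [Nat.primeFactors_mul (pow_ne_zero e hp.ne_zero) hb,
      Nat.primeFactors_prime_pow he.ne' hp.nat_prime, insert_eq]
  rw [omegaWeight, omegaWeight, hfactors, div_mul_div_comm, Nat.cast_mul]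
  gcongr
  exact pow_card_insert_le hκ _ _

theorem hasSum_omegaWeight_prime_pow {p : ℕ} (hp : p.Prime) :
    HasSum (fun e => omegaWeight κ (p ^ e)) (1 + κ * (1 / ((p : ℝ) - 1))) := by
  have hp_one : (1 : ℝ) < p := by exact_mod_cast hp.one_lt
  have hp_sub : (p : ℝ) - 1 ≠ 0 := by linarith
  rw [← hasSum_nat_add_iff' 1]
  have hgeom := (hasSum_geometric_of_lt_one (inv_nonneg.2 p.cast_nonneg)
    (inv_lt_one_of_one_lt₀ hp_one)).mul_left (κ * (p : ℝ)⁻¹)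
  convert! hgeom using 1
  · ext e
    rw [omegaWeight_prime_pow hp e.succ_ne_zero, pow_succ', mul_assoc]
  · rw [sum_range_one, pow_zero, omegaWeight_one]
    field_simp
    ring

theorem sum_divisors_omegaWeight_le_prod (hκ : 0 ≤ κ) (L : ℕ) :
    ∑ g ∈ L.divisors, omegaWeight κ g ≤
      ∏ p ∈ L.primeFactors, (1 + κ * (1 / ((p : ℝ) - 1))) := by
  have hEuler : HasSum (fun m : Nat.factoredNumbers L.primeFactors => omegaWeight κ m)
      (∏ p ∈ L.primeFactors with p.Prime, ∑' e, omegaWeight κ (p ^ e)) :=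
    (EulerProduct.summable_and_hasSum_factoredNumbers_prod_filter_prime_tsum omegaWeight_one
      omegaWeight_mul_of_coprime (fun hp => (hasSum_omegaWeight_prime_pow hp).summable.norm) _).2
  have hprod : ∏ p ∈ L.primeFactors with p.Prime, ∑' e, omegaWeight κ (p ^ e) =
      ∏ p ∈ L.primeFactors, (1 + κ * (1 / ((p : ℝ) - 1))) := by
    rw [filter_true_of_mem fun p => Nat.prime_of_mem_primeFactors]
    exact prod_congr rfl fun p hp =>
      (hasSum_omegaWeight_prime_pow (Nat.prime_of_mem_primeFactors hp)).tsum_eq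
  have hmem (g : ℕ) (hg : g ∈ L.divisors) : g ∈ Nat.factoredNumbers L.primeFactors :=
    Nat.mem_factoredNumbers_of_primeFactors_subset (Nat.pos_of_mem_divisors hg).ne'
      (Nat.primeFactors_mono (Nat.dvd_of_mem_divisors hg) (Nat.mem_divisors.1 hg).2)
  rw [← hprod, ← sum_subtype_of_mem _ hmem]
  exact sum_le_hasSum _ (fun m _ => omegaWeight_nonneg hκ m) hEuler

theorem exists_sum_divisors_omegaWeight_le (hκ : 0 ≤ κ) :
    ∃ B : ℝ, 0 ≤ B ∧ ∀ L N : ℕ, 2 ≤ N → log L ≤ N →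
      ∑ g ∈ L.divisors, omegaWeight κ g ≤ B * log N ^ κ := by
  obtain ⟨E, hE⟩ := exists_sum_primeFactors_inv_sub_one_le
  refine ⟨exp (κ * E), by positivity, fun L N hN hLN => ?_⟩
  have hlogN : 0 < log N := log_pos (by exact_mod_cast hN)
  calc ∑ g ∈ L.divisors, omegaWeight κ g
      ≤ ∏ p ∈ L.primeFactors, (1 + κ * (1 / ((p : ℝ) - 1))) := sum_divisors_omegaWeight_le_prod hκ L
    _ ≤ exp (∑ p ∈ L.primeFactors, κ * (1 / ((p : ℝ) - 1))) := by
        rw [exp_sum]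
        refine prod_le_prod (fun p hp => ?_) fun p _ => add_comm 1 (κ * _) ▸ add_one_le_exp _
        have hp_one : (1 : ℝ) ≤ p := by
          exact_mod_cast (Nat.prime_of_mem_primeFactors hp).one_le
        have := sub_nonneg.2 hp_one
        positivity
    _ ≤ exp (κ * (log (log N) + E)) := by
        rw [← mul_sum]
        gcongr
        exact hE L N hN hLN
    _ = exp (κ * E) * log N ^ κ := by
        rw [rpow_def_of_pos hlogN, ← exp_add]
        ring_nf

theorem exists_sum_divisors_log_mul_omegaWeight_le (hκ : 0 ≤ κ) :
    ∃ C : ℝ, 0 ≤ C ∧ ∀ L N : ℕ, 2 ≤ N → log L ≤ N →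
      ∑ g ∈ L.divisors, log g * omegaWeight κ g ≤ C * log N ^ (κ + 1) := by
  obtain ⟨B, hB_nonneg, hB⟩ := exists_sum_divisors_omegaWeight_le hκ
  set A : ℝ := 1 + (log 4 + 5) / log 2
  refine ⟨max 1 κ * A * B, by positivity, fun L N hN hLN => ?_⟩
  have hlogN : 0 < log N := log_pos (by exact_mod_cast hN)
  have hA : ∑ a ∈ L.divisors, Λ a / a ≤ A * log N := by
    have hlog_two : log 2 ≤ log N := log_le_log two_pos (by exact_mod_cast hN)
    have hconst : log 4 + 5 ≤ (log 4 + 5) / log 2 * log N := by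
      rw [div_mul_eq_mul_div, le_div_iff₀ (by positivity)]
      gcongr
    linear_combination sum_divisors_vonMangoldt_div_le (two_pos.trans_le hN) hLN + hconst
  calc ∑ g ∈ L.divisors, log g * omegaWeight κ g
      ≤ (∑ a ∈ L.divisors, Λ a * (max 1 κ / a)) * ∑ b ∈ L.divisors, omegaWeight κ b :=
        sum_divisors_log_mul_le (omegaWeight_nonneg hκ)
          (fun _ b ha => omegaWeight_mul_le hκ ha b) L
    _ = max 1 κ * (∑ a ∈ L.divisors, Λ a / a) * ∑ b ∈ L.divisors, omegaWeight κ b := by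
        simp only [mul_div_left_comm, mul_sum]
    _ ≤ max 1 κ * (A * log N) * (B * log N ^ κ) := by
        gcongr
        · exact sum_nonneg fun b _ => omegaWeight_nonneg hκ b
        · exact hB L N hN hLN
    _ = max 1 κ * A * B * log N ^ (κ + 1) := by
        rw [rpow_add_one hlogN.ne']
        ring

end OmegaWeight

theorem log_natCeil_le {y₀ y : ℝ} (hy₀ : 1 < y₀) (hy : y₀ ≤ y) :
    log ⌈y⌉₊ ≤ (1 + log 2 / log y₀) * log y := by
  have hlog : log y₀ ≤ log y := log_le_log (by linarith) hy
  have hlog₀ : 0 < log y₀ := log_pos hy₀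
  calc log ⌈y⌉₊
      ≤ log (2 * y) :=
        log_le_log (Nat.cast_pos.2 (Nat.ceil_pos.2 (by linarith)))
          (Nat.ceil_le_two_mul (by linarith))
    _ = log y + log 2 / log y₀ * log y₀ := by
        rw [log_mul two_ne_zero (by linarith), div_mul_cancel₀ _ hlog₀.ne', add_comm]
    _ ≤ log y + log 2 / log y₀ * log y := by gcongr
    _ = (1 + log 2 / log y₀) * log y := by ring

theorem one_lt_log_three : 1 < log 3 := by
  rw [lt_log_iff_exp_lt three_pos]
  exact exp_one_lt_three

theorem sum_divisors_log_pow_omega_le_general (κ : ℝ) (hκ : 0 ≤ κ) :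
    ∃ C : ℝ, ∀ L : ℕ, 0 < L →
      ∑ g ∈ L.divisors, log g / g * κ ^ #g.primeFactors ≤
        C * log (log ((L : ℝ) + 2)) ^ (κ + 1) := by
  obtain ⟨C, hC_nonneg, hC⟩ := exists_sum_divisors_log_mul_omegaWeight_le hκ
  set c : ℝ := 1 + log 2 / log (log 3)
  refine ⟨C * c ^ (κ + 1), fun L hL => ?_⟩
  have hL_one : (1 : ℝ) ≤ L := by exact_mod_cast hL
  set y := log ((L : ℝ) + 2)
  have hy : log 3 ≤ y := log_le_log three_pos (by linarith)
  have hy_one : 1 < y := one_lt_log_three.trans_le hy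
  have hc : 0 ≤ c := by have := log_pos one_lt_log_three; positivity
  have hceil : 2 ≤ ⌈y⌉₊ := Nat.lt_ceil.2 (by exact_mod_cast hy_one)
  have hLy : log L ≤ ⌈y⌉₊ := (log_le_log (by linarith) (by linarith)).trans (Nat.le_ceil y)
  calc ∑ g ∈ L.divisors, log g / g * κ ^ #g.primeFactors
      = ∑ g ∈ L.divisors, log g * omegaWeight κ g :=
        sum_congr rfl fun g _ => by rw [omegaWeight, div_mul_eq_mul_div, mul_div_assoc]
    _ ≤ C * log ⌈y⌉₊ ^ (κ + 1) := hC L ⌈y⌉₊ hceil hLy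
    _ ≤ C * (c * log y) ^ (κ + 1) := by
        gcongr
        exact log_natCeil_le one_lt_log_three hy
    _ = C * c ^ (κ + 1) * log y ^ (κ + 1) := by
        rw [mul_rpow hc (log_nonneg hy_one.le), mul_assoc]

/-- Proposition 3.19: for every positive integer `k` there is a constant `C_k` such that for
all positive integers `L`, `∑_{g ∣ L} (log g / g) k^{ω(g)} ≤ C_k (log log (L + 2))^{k+1}`,
where `ω(g)` is the number of distinct prime divisors of `g`. -/
theorem sum_divisors_log_pow_omega_le (k : ℕ) (hk : 0 < k) :
    ∃ C : ℝ, ∀ L : ℕ, 0 < L →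
      ∑ g ∈ L.divisors, (Real.log g / g) * (k : ℝ) ^ g.primeFactors.card ≤
        C * (Real.log (Real.log ((L : ℝ) + 2))) ^ (k + 1) := by
  exact_mod_cast sum_divisors_log_pow_omega_le_general k k.cast_nonneg
end

section
/- Let N, f, f', q₁, q₂, K be positive integers with f ∣ N, f' ∣ N, q₁ ∣ N/f, q₂ ∣ f, and K ∣ N, and suppose that for every prime p: if p ∣ q₁ then ν_p(K) ≤ ν_p(f) − ν_p(q₂), and if p ∣ q₂ but p ∤ q₁ then ν_p(K) ≤ ν_p(N) − ν_p(q₂). If q₂ ∣ f' and for every prime p dividing q₁ one has ν_p(f') ≤ ν_p(q₂) + ν_p(K), then lcm(q₁, q₂) divides lcm(f', N/f'). -/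
/-!
The divisor `q₂` already divides `f'`, so the point is that `q₁ ∣ N / f'`, that is, `f' * q₁ ∣ N`.
This is compared with `f * q₁ ∣ N` one prime at a time: at the primes dividing `q₁` the two
bounds on the valuation of `K` give `ν_p(f') ≤ ν_p(f)`, and at all other primes `q₁` contributes
nothing and `f' ∣ N` suffices.
-/

theorem mul_dvd_of_mul_dvd_of_factorization_le {m n d N : ℕ} (hmd : m * d ∣ N) (hn : n ∣ N)
    (hle : ∀ p : ℕ, p.Prime → p ∣ d → n.factorization p ≤ m.factorization p) :
    n * d ∣ N := by
  rcases eq_or_ne N 0 with rfl | hN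
  · exact dvd_zero _
  have hmd₀ : m * d ≠ 0 := ne_zero_of_dvd_ne_zero hN hmd
  have hm₀ : m ≠ 0 := left_ne_zero_of_mul hmd₀
  have hd₀ : d ≠ 0 := right_ne_zero_of_mul hmd₀
  have hn₀ : n ≠ 0 := ne_zero_of_dvd_ne_zero hN hn
  rw [← Nat.factorization_prime_le_iff_dvd (mul_ne_zero hn₀ hd₀) hN]
  intro p hp
  rw [Nat.factorization_mul hn₀ hd₀, Finsupp.add_apply]
  by_cases hpd : p ∣ d
  · calc n.factorization p + d.factorization p
        ≤ m.factorization p + d.factorization p := by gcongr; exact hle p hp hpd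
      _ = (m * d).factorization p := by rw [Nat.factorization_mul hm₀ hd₀, Finsupp.add_apply]
      _ ≤ N.factorization p := (Nat.factorization_prime_le_iff_dvd hmd₀ hN).2 hmd p hp
  · rw [Nat.factorization_eq_zero_of_not_dvd hpd, add_zero]
    exact (Nat.factorization_prime_le_iff_dvd hn₀ hN).2 hn p hp

theorem dvd_div_of_dvd_div_of_factorization_le {m n d N : ℕ} (hm : m ∣ N) (hn : n ∣ N)
    (hd : d ∣ N / m)
    (hle : ∀ p : ℕ, p.Prime → p ∣ d → n.factorization p ≤ m.factorization p) :
    d ∣ N / n :=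
  (Nat.dvd_div_iff_mul_dvd hn).2 <|
    mul_dvd_of_mul_dvd_of_factorization_le ((Nat.dvd_div_iff_mul_dvd hm).1 hd) hn hle

theorem lcm_dvd_lcm_of_former_case_general {N f f' q₁ q₂ : ℕ} (hfN : f ∣ N) (hf'N : f' ∣ N)
    (hq₁N : q₁ ∣ N / f) (hq₂f' : q₂ ∣ f')
    (hle : ∀ p : ℕ, p.Prime → p ∣ q₁ → f'.factorization p ≤ f.factorization p) :
    Nat.lcm q₁ q₂ ∣ Nat.lcm f' (N / f') :=
  have hq₁f' : q₁ ∣ N / f' := dvd_div_of_dvd_div_of_factorization_le hfN hf'N hq₁N hle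
  Nat.lcm_dvd (hq₁f'.trans (Nat.dvd_lcm_right _ _)) (hq₂f'.trans (Nat.dvd_lcm_left _ _))

/-- The 'former case' of Lemma 3.12: with `f ∣ N`, `f' ∣ N`, `q₁ ∣ N/f`, `q₂ ∣ f`, `K ∣ N`,
and the valuation restrictions on `K`, if `q₂ ∣ f'` and `ν_p(f') ≤ ν_p(q₂) + ν_p(K)` for
every prime `p ∣ q₁`, then `lcm(q₁, q₂) ∣ lcm(f', N/f')`. -/
theorem lcm_dvd_lcm_of_former_case
    (N f f' q₁ q₂ K : ℕ) (hN : 0 < N) (hf : 0 < f) (hf' : 0 < f')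
    (hq₁ : 0 < q₁) (hq₂ : 0 < q₂) (hK : 0 < K)
    (hfN : f ∣ N) (hf'N : f' ∣ N) (hq₁N : q₁ ∣ N / f) (hq₂f : q₂ ∣ f) (hKN : K ∣ N)
    (hK₁ : ∀ p : ℕ, p.Prime → p ∣ q₁ →
      (K.factorization p : ℤ) ≤ (f.factorization p : ℤ) - (q₂.factorization p : ℤ))
    (hK₂ : ∀ p : ℕ, p.Prime → p ∣ q₂ → ¬p ∣ q₁ →
      (K.factorization p : ℤ) ≤ (N.factorization p : ℤ) - (q₂.factorization p : ℤ))
    (hq₂f' : q₂ ∣ f')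
    (hval : ∀ p : ℕ, p.Prime → p ∣ q₁ →
      f'.factorization p ≤ q₂.factorization p + K.factorization p) :
    Nat.lcm q₁ q₂ ∣ Nat.lcm f' (N / f') := by
  refine lcm_dvd_lcm_of_former_case_general hfN hf'N hq₁N hq₂f' fun p hp hpq₁ => ?_
  linarith [hK₁ p hp hpq₁, hval p hp hpq₁]
end

section
/- Let N, f, f', q₁, q₂, K be positive integers with f ∣ N, f' ∣ N, q₁ ∣ N/f, q₂ ∣ f, and K ∣ N, and suppose that for every prime p: if p ∣ q₁ then ν_p(K) ≤ ν_p(f) − ν_p(q₂), and if p ∣ q₂ but p ∤ q₁ then ν_p(K) ≤ ν_p(N) − ν_p(q₂). If q₁ ∣ f' and for every prime p dividing q₂ one has ν_p(f') ≤ ν_p(q₁) + ν_p(K), then lcm(q₁, q₂) divides lcm(f', N/f'). -/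
/-!
At a prime `p ∣ q₂`, the bounds on `K` combine to `ν_p(f') + ν_p(q₂) ≤ ν_p(N)`: if `p ∣ q₁`, then
`ν_p(f') + ν_p(q₂) ≤ ν_p(q₁) + ν_p(K) + ν_p(q₂) ≤ ν_p(q₁) + ν_p(f) ≤ ν_p(N)`, and if `p ∤ q₁`, then
`ν_p(f') + ν_p(q₂) ≤ ν_p(K) + ν_p(q₂) ≤ ν_p(N)`. Hence `f' * q₂ ∣ N`, so that `q₂ ∣ N / f'`, while
`q₁ ∣ f'`.
-/

theorem mul_dvd_iff_factorization_add_le {a b n : ℕ} (ha : a ≠ 0) (hb : b ≠ 0) (hn : n ≠ 0) :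
    a * b ∣ n ↔ ∀ p, a.factorization p + b.factorization p ≤ n.factorization p := by
  simp only [← Nat.factorization_le_iff_dvd (mul_ne_zero ha hb) hn, Nat.factorization_mul ha hb,
    Finsupp.le_def, Finsupp.add_apply]

theorem mul_dvd_of_dvd_of_factorization_add_le {a b n : ℕ} (hb : b ≠ 0) (hn : n ≠ 0) (han : a ∣ n)
    (h : ∀ p, p.Prime → p ∣ b → a.factorization p + b.factorization p ≤ n.factorization p) :
    a * b ∣ n := by
  have ha : a ≠ 0 := ne_zero_of_dvd_ne_zero hn han
  refine (mul_dvd_iff_factorization_add_le ha hb hn).2 fun p ↦ ?_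
  by_cases hp : p.Prime ∧ p ∣ b
  · exact h p hp.1 hp.2
  · have hbp : b.factorization p = 0 := (Nat.factorization_eq_zero_iff b p).2 (by tauto)
    simpa only [hbp, add_zero] using (Nat.factorization_le_iff_dvd ha hn).2 han p

/-- Here `k p` plays the role of `ν_p(K)`. -/
theorem lcm_dvd_lcm_of_latter_case_general {N f f' q₁ q₂ : ℕ} (k : ℕ → ℕ) (hN : N ≠ 0)
    (hq₂ : q₂ ≠ 0) (hf'N : f' ∣ N) (hfq₁ : f * q₁ ∣ N)
    (hk₁ : ∀ p, p.Prime → p ∣ q₂ → p ∣ q₁ →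
      k p + q₂.factorization p ≤ f.factorization p)
    (hk₂ : ∀ p, p.Prime → p ∣ q₂ → ¬p ∣ q₁ →
      k p + q₂.factorization p ≤ N.factorization p)
    (hq₁f' : q₁ ∣ f')
    (hval : ∀ p, p.Prime → p ∣ q₂ → f'.factorization p ≤ q₁.factorization p + k p) :
    Nat.lcm q₁ q₂ ∣ Nat.lcm f' (N / f') := by
  obtain ⟨hf, hq₁⟩ := mul_ne_zero_iff.1 (ne_zero_of_dvd_ne_zero hN hfq₁)
  suffices hf'q₂ : f' * q₂ ∣ N from lcm_dvd_lcm hq₁f' (Nat.dvd_div_of_mul_dvd hf'q₂)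
  refine mul_dvd_of_dvd_of_factorization_add_le hq₂ hN hf'N fun p hp hpq₂ ↦ ?_
  have hf'p : f'.factorization p ≤ q₁.factorization p + k p := hval p hp hpq₂
  by_cases hpq₁ : p ∣ q₁
  · calc
      f'.factorization p + q₂.factorization p
        ≤ k p + q₂.factorization p + q₁.factorization p := by lia
      _ ≤ f.factorization p + q₁.factorization p := by gcongr; exact hk₁ p hp hpq₂ hpq₁
      _ ≤ N.factorization p := (mul_dvd_iff_factorization_add_le hf hq₁ hN).1 hfq₁ p
  · rw [Nat.factorization_eq_zero_of_not_dvd hpq₁, zero_add] at hf'p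
    calc
      f'.factorization p + q₂.factorization p ≤ k p + q₂.factorization p := by gcongr
      _ ≤ N.factorization p := hk₂ p hp hpq₂ hpq₁

/-- The 'latter case' of Lemma 3.12: with `f ∣ N`, `f' ∣ N`, `q₁ ∣ N/f`, `q₂ ∣ f`, `K ∣ N`,
and the valuation restrictions on `K`, if `q₁ ∣ f'` and `ν_p(f') ≤ ν_p(q₁) + ν_p(K)` for
every prime `p ∣ q₂`, then `lcm(q₁, q₂) ∣ lcm(f', N/f')`. -/
theorem lcm_dvd_lcm_of_latter_case
    (N f f' q₁ q₂ K : ℕ) (hN : 0 < N) (hf : 0 < f) (hf' : 0 < f')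
    (hq₁ : 0 < q₁) (hq₂ : 0 < q₂) (hK : 0 < K)
    (hfN : f ∣ N) (hf'N : f' ∣ N) (hq₁N : q₁ ∣ N / f) (hq₂f : q₂ ∣ f) (hKN : K ∣ N)
    (hK₁ : ∀ p : ℕ, p.Prime → p ∣ q₁ →
      (K.factorization p : ℤ) ≤ (f.factorization p : ℤ) - (q₂.factorization p : ℤ))
    (hK₂ : ∀ p : ℕ, p.Prime → p ∣ q₂ → ¬p ∣ q₁ →
      (K.factorization p : ℤ) ≤ (N.factorization p : ℤ) - (q₂.factorization p : ℤ))
    (hq₁f' : q₁ ∣ f')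
    (hval : ∀ p : ℕ, p.Prime → p ∣ q₂ →
      f'.factorization p ≤ q₁.factorization p + K.factorization p) :
    Nat.lcm q₁ q₂ ∣ Nat.lcm f' (N / f') :=
  lcm_dvd_lcm_of_latter_case_general K.factorization hN.ne' hq₂.ne' hf'N
    (Nat.mul_dvd_of_dvd_div hfN hq₁N) (fun p hp _ hpq₁ ↦ by have := hK₁ p hp hpq₁; lia)
    (fun p hp hpq₂ hpq₁ ↦ by have := hK₂ p hp hpq₂ hpq₁; lia) hq₁f' hval
end

section
/- Let G be a group acting on a set X, let H be a subgroup of G, and let a, b ∈ X. Consider the set S of right cosets Hγ in H\G such that γ·b lies in the H-orbit of a (this condition is independent of the coset representative γ). If a does not lie in the G-orbit of b, then S is empty; if a lies in the G-orbit of b, then S is in bijection with the right coset space (Stab_G(a) ∩ H)\Stab_G(a), where Stab_G(a) denotes the stabilizer of a in G. -/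
/-!
If `g • b = a`, then `γ • b = (γ * g⁻¹) • a` lies in the `H`-orbit of `a` exactly when `γ * g⁻¹`
lies in `H * Stab_G(a)`. So the cosets in question are the `H * (k * g)` with `k ∈ Stab_G(a)`, and
`k`, `l` give the same coset iff `l * k⁻¹ ∈ H`, that is, iff they lie in the same right coset of
`Stab_G(a) ∩ H` in `Stab_G(a)`.
-/

open MulAction QuotientGroup

theorem rightRel_comap_eq_comap_mul_right {G K : Type*} [Group G] [Group K] (H : Subgroup G)
    (f : K →* G) (g : G) :
    rightRel (H.comap f) = (rightRel H).comap (fun k => f k * g) := by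
  ext k l
  simp only [Setoid.comap_rel, rightRel_apply, Subgroup.mem_comap, map_mul, map_inv, mul_inv_rev,
    mul_assoc, mul_inv_cancel_left]

section Orbits

variable {G X : Type*} [Group G] [MulAction G X] {H : Subgroup G} {a b : X} {g : G}

theorem smul_mem_orbit_subgroup_iff_of_smul_eq (hg : g • b = a) (γ : G) :
    γ • b ∈ orbit H a ↔ ∃ k ∈ stabilizer G a, rightRel H (k * g) γ := by
  simp only [rightRel_apply, mem_stabilizer_iff]
  constructor
  · rintro ⟨h, hh : (h : G) • a = γ • b⟩
    refine ⟨(h : G)⁻¹ * γ * g⁻¹, ?_, ?_⟩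
    · rw [mul_smul, mul_smul, inv_smul_eq_iff.mpr hg.symm, ← hh, inv_smul_smul]
    · simp
  · rintro ⟨k, hk, hγ⟩
    refine ⟨⟨γ * (k * g)⁻¹, hγ⟩, ?_⟩
    calc (γ * (k * g)⁻¹) • a = (γ * (k * g)⁻¹) • (k * g) • b := by rw [mul_smul k, hg, hk]
      _ = γ • b := by rw [smul_smul, inv_mul_cancel_right]

/-- The set of right cosets `Hγ` carrying `b` into the `H`-orbit of `a`. Membership asks for some
representative `γ` with this property; by `mk_mem_rightCosetsInto` it then holds for all. -/
def rightCosetsInto (H : Subgroup G) (a b : X) : Set (Quotient (rightRel H)) :=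
  {x | ∃ γ : G, x = Quotient.mk (rightRel H) γ ∧ γ • b ∈ orbit H a}

theorem mk_mem_rightCosetsInto {γ : G} :
    Quotient.mk (rightRel H) γ ∈ rightCosetsInto H a b ↔ γ • b ∈ orbit H a := by
  refine ⟨?_, fun hγ => ⟨γ, rfl, hγ⟩⟩
  rintro ⟨γ', hγγ', hγ'⟩
  obtain ⟨h, rfl⟩ : γ ∈ orbit H γ' := Quotient.exact hγγ'
  rw [smul_assoc]
  exact mem_orbit_of_mem_orbit h hγ'

theorem rightCosetsInto_nonempty_iff : (rightCosetsInto H a b).Nonempty ↔ a ∈ orbit G b := by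
  constructor
  · rintro ⟨_, γ, -, hγ⟩
    have orbit_eq : orbit G (γ • b) = orbit G a :=
      orbit_eq_iff.mpr (mem_orbit_of_mem_orbit_subgroup hγ)
    rw [← orbit_eq_iff, ← orbit_eq, orbit_smul]
  · rintro ⟨γ, rfl⟩
    exact ⟨_, mk_mem_rightCosetsInto.mpr (mem_orbit_self _)⟩

theorem range_mk_mul_right_stabilizer (hg : g • b = a) :
    Set.range (fun k : stabilizer G a => Quotient.mk (rightRel H) (k * g)) =
      rightCosetsInto H a b := by
  ext x
  induction x using Quotient.inductionOn with | _ γ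
  rw [mk_mem_rightCosetsInto, smul_mem_orbit_subgroup_iff_of_smul_eq hg]
  simp only [Set.mem_range, Subtype.exists, Quotient.eq, exists_prop]

/-- The bijection between the right cosets carrying `b` into the `H`-orbit of `a = g • b` and the
right cosets of `H ∩ Stab_G(a)` in `Stab_G(a)`; the class of `k` corresponds to `H * (k * g)`. -/
noncomputable def rightCosetsIntoEquiv (H : Subgroup G) (hg : g • b = a) :
    rightCosetsInto H a b ≃ Quotient (rightRel (H.subgroupOf (stabilizer G a))) :=
  (Equiv.setCongr (range_mk_mul_right_stabilizer hg).symm).trans <|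
    (Setoid.comapQuotientEquiv (fun k : stabilizer G a => (k : G) * g) (rightRel H)).symm.trans <|
      Quotient.congrRight <| Setoid.ext_iff.mp
        (rightRel_comap_eq_comap_mul_right H (stabilizer G a).subtype g).symm

end Orbits

/-- Lemma 2.6 (orbit–stabilizer form): for a group `G` acting on `X`, a subgroup `H ≤ G` and
`a, b ∈ X`, consider the set `S` of right cosets `Hγ` such that `γ·b` lies in the `H`-orbit
of `a`. If `a` is not in the `G`-orbit of `b` then `S` is empty; otherwise `S` is in
bijection with the right coset space `(Stab_G(a) ∩ H)\Stab_G(a)`. -/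
theorem coset_set_empty_or_equiv
    {G : Type*} [Group G] {X : Type*} [MulAction G X] (H : Subgroup G) (a b : X)
    (S : Set (Quotient (QuotientGroup.rightRel H)))
    (hS : S = {x | ∃ γ : G, x = Quotient.mk (QuotientGroup.rightRel H) γ ∧
      γ • b ∈ MulAction.orbit H a}) :
    (a ∉ MulAction.orbit G b → S = ∅) ∧
    (a ∈ MulAction.orbit G b →
      Nonempty (S ≃ Quotient (QuotientGroup.rightRel
        ((MulAction.stabilizer G a ⊓ H).subgroupOf (MulAction.stabilizer G a))))) := by
  obtain rfl : S = rightCosetsInto H a b := hS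
  constructor
  · intro ha
    rwa [← Set.not_nonempty_iff_eq_empty, rightCosetsInto_nonempty_iff]
  · rintro ⟨g, hg⟩
    rw [Subgroup.inf_subgroupOf_left]
    exact ⟨rightCosetsIntoEquiv H hg⟩
end
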